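/- arXiv:2305.12553 — 2 statements merged into one kernel-verified Lean document; each statement's English description precedes it below -/
import Mathlib

section
/- (Lemma: value differences of the smoothed game are uniformly close to those of the original game.) In a finite Markov game with smoothing parameter τ > 0, for every player i, all policies π_i, π_i' of player i, every π_{-i}, and every probability distribution μ on S: |( V_i(μ,(π_i,π_{-i})) − V_i(μ,(π_i',π_{-i})) ) − ( Ṽ_i(μ,(π_i,π_{-i})) − Ṽ_i(μ,(π_i',π_{-i})) )| ≤ 2·τ·log|A_i| / (1−δ). -/
open Finset

section MarkovGameDefs

variable {S : Type*} {I : Type*} {A : I → Type*}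

/-- A probability vector on a finite set. -/
def IsProbVec {α : Type*} [Fintype α] (p : α → ℝ) : Prop :=
  (∀ a, 0 ≤ p a) ∧ ∑ a, p a = 1

/-- A stationary policy profile: each player's policy gives a probability vector at each state. -/
def IsPolicy [Fintype I] [∀ i, Fintype (A i)] (π : ∀ i, S → A i → ℝ) : Prop :=
  ∀ i s, IsProbVec (π i s)

/-- A transition kernel. -/
def IsKernel [Fintype S] (P : S → (∀ i, A i) → S → ℝ) : Prop :=
  ∀ s a, IsProbVec (fun s' => P s a s')

/-- Product distribution on joint actions induced by a profile. -/
noncomputable def jointDist [Fintype I] (π : ∀ i, S → A i → ℝ) (s : S) (a : ∀ i, A i) : ℝ :=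
  ∏ i, π i s (a i)

/-- Induced transition matrix `P^π`. -/
noncomputable def transMat [Fintype S] [Fintype I] [DecidableEq I] [∀ i, Fintype (A i)]
    (P : S → (∀ i, A i) → S → ℝ) (π : ∀ i, S → A i → ℝ) (s s' : S) : ℝ :=
  ∑ a : ∀ j, A j, jointDist π s a * P s a s'

/-- Expected one-stage payoff `u(s,π)`. -/
noncomputable def expPay [Fintype I] [DecidableEq I] [∀ i, Fintype (A i)]
    (u : S → (∀ i, A i) → ℝ) (π : ∀ i, S → A i → ℝ) (s : S) : ℝ :=
  ∑ a : ∀ j, A j, jointDist π s a * u s a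

/-- `V` solves the Bellman equation for payoff `u`, kernel `P`, discount `δ`, profile `π`. -/
def IsValueFun [Fintype S] [Fintype I] [DecidableEq I] [∀ i, Fintype (A i)]
    (δ : ℝ) (P : S → (∀ i, A i) → S → ℝ) (u : S → (∀ i, A i) → ℝ)
    (π : ∀ i, S → A i → ℝ) (V : S → ℝ) : Prop :=
  ∀ s, V s = expPay u π s + δ * ∑ s', transMat P π s s' * V s'

/-- Player `i`'s Q-function, given a value function `V` for player `i` under `π`. -/
noncomputable def Qfun [Fintype S] [Fintype I] [DecidableEq I] [∀ i, Fintype (A i)]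
    [∀ i, DecidableEq (A i)]
    (δ : ℝ) (P : S → (∀ i, A i) → S → ℝ) (u : S → (∀ i, A i) → ℝ)
    (π : ∀ i, S → A i → ℝ) (V : S → ℝ) (i : I) (s : S) (ai : A i) : ℝ :=
  ∑ a : ∀ j, A j,
    if a i = ai then
      (∏ j ∈ Finset.univ.erase i, π j s (a j)) * (u s a + δ * ∑ s', P s a s' * V s')
    else 0

/-- Discounted state visitation distribution `d_μ^π`. -/
noncomputable def dvisit [Fintype S] [DecidableEq S] [Fintype I] [DecidableEq I]
    [∀ i, Fintype (A i)]
    (δ : ℝ) (P : S → (∀ i, A i) → S → ℝ) (π : ∀ i, S → A i → ℝ) (μ : S → ℝ) (s : S) : ℝ :=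
  (1 - δ) * ∑' k : ℕ, δ ^ k * ∑ s0, μ s0 * ((Matrix.of (transMat P π)) ^ k) s0 s

/-- Negative entropy `ν(p) = ∑ p log p` (with the convention `0 log 0 = 0`,
which holds automatically since `Real.log 0 = 0`). -/
noncomputable def negent {α : Type*} [Fintype α] (p : α → ℝ) : ℝ :=
  ∑ a, p a * Real.log (p a)

/-- `Ṽ` solves the Bellman equation of the `τ`-smoothed game for player `i`. -/
def IsSmoothedValueFun [Fintype S] [Fintype I] [DecidableEq I] [∀ i, Fintype (A i)]
    (δ τ : ℝ) (P : S → (∀ i, A i) → S → ℝ) (u : S → (∀ i, A i) → ℝ)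
    (π : ∀ i, S → A i → ℝ) (i : I) (Vt : S → ℝ) : Prop :=
  ∀ s, Vt s = expPay u π s - τ * negent (π i s) + δ * ∑ s', transMat P π s s' * Vt s'

/-- Smoothed Q-function `Q̃_i(s,a_i;π)`. -/
noncomputable def Qsmooth [Fintype S] [Fintype I] [DecidableEq I] [∀ i, Fintype (A i)]
    [∀ i, DecidableEq (A i)]
    (δ τ : ℝ) (P : S → (∀ i, A i) → S → ℝ) (u : S → (∀ i, A i) → ℝ)
    (π : ∀ i, S → A i → ℝ) (Vt : S → ℝ) (i : I) (s : S) (ai : A i) : ℝ :=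
  ∑ a : ∀ j, A j,
    if a i = ai then
      (∏ j ∈ Finset.univ.erase i, π j s (a j)) *
        (u s a - τ * negent (π i s) + δ * ∑ s', P s a s' * Vt s')
    else 0

/-- Euclidean (ℓ²) norm on `α → ℝ`. -/
noncomputable def l2norm {α : Type*} [Fintype α] (f : α → ℝ) : ℝ :=
  Real.sqrt (∑ a, f a ^ 2)

/-- Standard inner product on `α → ℝ`. -/
noncomputable def dotp {α : Type*} [Fintype α] (f g : α → ℝ) : ℝ :=
  ∑ a, f a * g a

/-- `y` is the Euclidean orthogonal projection of `x` onto the probability simplex. -/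
noncomputable def IsProjSimplex {α : Type*} [Fintype α] (x y : α → ℝ) : Prop :=
  IsProbVec y ∧ ∀ z, IsProbVec z → l2norm (fun a => y a - x a) ≤ l2norm (fun a => z a - x a)

/-- Softmax (smoothed best response) with temperature `τ`. -/
noncomputable def softmax {α : Type*} [Fintype α] (τ : ℝ) (q : α → ℝ) (a : α) : ℝ :=
  Real.exp (q a / τ) / ∑ a', Real.exp (q a' / τ)

end MarkovGameDefs

lemma aux_max {S : Type*} [Fintype S] [Nonempty S] (δ c : ℝ) (hδ : 0 < δ) (hδ1 : δ < 1)
    (T : S → S → ℝ) (hT : ∀ s, IsProbVec (T s)) (D : S → ℝ)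
    (hD : ∀ s, D s ≤ c + δ * ∑ s', T s s' * D s') (s : S) : D s ≤ c / (1 - δ) := by
  obtain ⟨m, hm⟩ := Finite.exists_max D
  refine (hm s).trans ?_
  rw [le_div_iff₀ (by linarith)]
  have h1 : ∑ s', T m s' * D s' ≤ D m := by
    calc ∑ s', T m s' * D s' ≤ ∑ s', T m s' * D m :=
          Finset.sum_le_sum fun x _ => mul_le_mul_of_nonneg_left (hm x) ((hT m).1 x)
      _ = D m := by rw [← Finset.sum_mul, (hT m).2, one_mul]
  have h2 := hD m
  nlinarith [mul_le_mul_of_nonneg_left h1 hδ.le]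

lemma aux_negent_nonpos {α : Type*} [Fintype α] (p : α → ℝ) (hp : IsProbVec p) :
    negent p ≤ 0 := by
  refine Finset.sum_nonpos fun a _ => ?_
  have h1 : p a ≤ 1 := by
    rw [← hp.2]
    exact Finset.single_le_sum (fun b _ => hp.1 b) (Finset.mem_univ a)
  exact mul_nonpos_of_nonneg_of_nonpos (hp.1 a) (Real.log_nonpos (hp.1 a) h1)

lemma aux_negent_ge {α : Type*} [Fintype α] [Nonempty α] (p : α → ℝ) (hp : IsProbVec p) :
    - negent p ≤ Real.log (Fintype.card α) := by
  have hn : (0 : ℝ) < Fintype.card α := by exact_mod_cast Fintype.card_pos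
  set n : ℝ := (Fintype.card α : ℝ) with hn'
  have key : ∀ a, p a - 1 / n ≤ p a * Real.log (p a) + p a * Real.log n := by
    intro a
    rcases (hp.1 a).eq_or_lt with h | h
    · rw [← h]; simp; exact hn.le
    · have h3 := Real.log_le_sub_one_of_pos (inv_pos.2 (mul_pos h hn))
      rw [Real.log_inv, Real.log_mul h.ne' hn.ne'] at h3
      have h4 := mul_le_mul_of_nonneg_left h3 h.le
      have h5 : p a * ((p a * n)⁻¹ - 1) = 1 / n - p a := by field_simp
      linarith
  have hs := Finset.sum_le_sum (s := Finset.univ) fun a _ => key a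
  rw [Finset.sum_sub_distrib, Finset.sum_add_distrib, ← Finset.sum_mul, hp.2] at hs
  simp only [Finset.sum_const, Finset.card_univ, nsmul_eq_mul] at hs
  rw [← hn', mul_one_div_cancel hn.ne'] at hs
  unfold negent
  linarith

lemma aux_trans {S I : Type*} [Fintype S] [Fintype I] [DecidableEq I]
    {A : I → Type*} [∀ i, Fintype (A i)]
    (P : S → (∀ i, A i) → S → ℝ) (hP : IsKernel P) (π : ∀ j, S → A j → ℝ) (hπ : IsPolicy π)
    (s : S) : IsProbVec (transMat P π s) := by
  constructor
  · intro s'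
    exact Finset.sum_nonneg fun a _ =>
      mul_nonneg (Finset.prod_nonneg fun i _ => (hπ i s).1 _) ((hP s a).1 s')
  · unfold transMat
    rw [Finset.sum_comm]
    have : ∀ a, ∑ s', jointDist π s a * P s a s' = jointDist π s a := by
      intro a
      rw [← Finset.mul_sum, (hP s a).2, mul_one]
    simp only [this]
    unfold jointDist
    rw [← Fintype.prod_sum (fun i x => π i s x)]
    exact Finset.prod_eq_one fun i _ => (hπ i s).2

lemma aux_bound {S I : Type*} [Fintype S] [Nonempty S] [Fintype I] [DecidableEq I]
    {A : I → Type*} [∀ i, Fintype (A i)] [∀ i, Nonempty (A i)]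
    (δ : ℝ) (hδ : 0 < δ) (hδ1 : δ < 1)
    (P : S → (∀ i, A i) → S → ℝ) (hP : IsKernel P) (u : S → (∀ i, A i) → ℝ)
    (τ : ℝ) (hτ : 0 < τ) (π : ∀ j, S → A j → ℝ) (hπ : IsPolicy π) (i : I) (V Vt : S → ℝ)
    (hV : IsValueFun δ P u π V) (hVt : IsSmoothedValueFun δ τ P u π i Vt)
    (μ : S → ℝ) (hμ : IsProbVec μ) :
    0 ≤ (∑ s, μ s * Vt s) - (∑ s, μ s * V s) ∧
    (∑ s, μ s * Vt s) - (∑ s, μ s * V s) ≤ τ * Real.log (Fintype.card (A i)) / (1 - δ) := by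
  have hT := aux_trans P hP π hπ
  have hD : ∀ s, Vt s - V s = - (τ * negent (π i s)) +
      δ * ∑ s', transMat P π s s' * (Vt s' - V s') := by
    intro s
    simp only [mul_sub, Finset.sum_sub_distrib]
    linarith [hV s, hVt s]
  have hup := aux_max δ (τ * Real.log (Fintype.card (A i))) hδ hδ1 _ hT (fun s => Vt s - V s)
    (fun s => by
      have := mul_le_mul_of_nonneg_left (aux_negent_ge _ (hπ i s)) hτ.le
      have h := hD s
      linarith)
  have hlo := aux_max δ 0 hδ hδ1 _ hT (fun s => - (Vt s - V s))
    (fun s => by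
      have := mul_nonpos_of_nonneg_of_nonpos hτ.le (aux_negent_nonpos _ (hπ i s))
      have h := hD s
      simp only [mul_neg, Finset.sum_neg_distrib]
      linarith)
  rw [← Finset.sum_sub_distrib]
  simp only [← mul_sub]
  constructor
  · refine Finset.sum_nonneg fun s _ => mul_nonneg (hμ.1 s) ?_
    have := hlo s
    simp only [zero_div] at this
    linarith
  · calc _ ≤ ∑ s, μ s * (τ * Real.log (Fintype.card (A i)) / (1 - δ)) :=
          Finset.sum_le_sum fun s _ => mul_le_mul_of_nonneg_left (hup s) (hμ.1 s)
      _ = _ := by rw [← Finset.sum_mul, hμ.2, one_mul]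

/-- **Lemma:** value differences of the smoothed game are uniformly close to those of the
original game. -/
theorem smoothed_value_difference_close
    {S I : Type*} [Fintype S] [Nonempty S] [DecidableEq S]
    [Fintype I] [Nonempty I] [DecidableEq I]
    {A : I → Type*} [∀ i, Fintype (A i)] [∀ i, Nonempty (A i)] [∀ i, DecidableEq (A i)]
    (δ : ℝ) (hδ : 0 < δ) (hδ1 : δ < 1)
    (P : S → (∀ i, A i) → S → ℝ) (hP : IsKernel P)
    (u : I → S → (∀ i, A i) → ℝ)
    (τ : ℝ) (hτ : 0 < τ)
    (V Vt : I → (∀ j, S → A j → ℝ) → S → ℝ)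
    (hV : ∀ i π, IsPolicy π → IsValueFun δ P (u i) π (V i π))
    (hVt : ∀ i π, IsPolicy π → IsSmoothedValueFun δ τ P (u i) π i (Vt i π)) :
    ∀ (i : I) (π : ∀ j, S → A j → ℝ), IsPolicy π →
      ∀ (πi' : S → A i → ℝ), (∀ s, IsProbVec (πi' s)) →
        ∀ (μ : S → ℝ), IsProbVec μ →
          |((∑ s, μ s * V i π s) - (∑ s, μ s * V i (Function.update π i πi') s)) -
              ((∑ s, μ s * Vt i π s) - (∑ s, μ s * Vt i (Function.update π i πi') s))| ≤
            2 * τ * Real.log (Fintype.card (A i)) / (1 - δ) := by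
  intro i π hπ πi' hπi' μ hμ
  have hπ2 : IsPolicy (Function.update π i πi') := by
    intro j s
    by_cases h : j = i
    · subst h; simpa using hπi' s
    · simpa [h] using hπ j s
  obtain ⟨a1, a2⟩ := aux_bound δ hδ hδ1 P hP (u i) τ hτ π hπ i _ _ (hV i π hπ) (hVt i π hπ) μ hμ
  obtain ⟨b1, b2⟩ := aux_bound δ hδ hδ1 P hP (u i) τ hτ _ hπ2 i _ _ (hV i _ hπ2) (hVt i _ hπ2) μ hμ
  have e : 2 * τ * Real.log (Fintype.card (A i)) / (1 - δ) =
      τ * Real.log (Fintype.card (A i)) / (1 - δ) +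
      τ * Real.log (Fintype.card (A i)) / (1 - δ) := by ring
  rw [e, abs_le]
  constructor <;> linarith
end

section
/- (One-step potential improvement for the smoothed best response update, underlying Lemma technical (b).) Consider a finite Markov game with smoothing parameter τ > 0 and smoothed value functions Ṽ_i. Suppose Φ̃ (a real number Φ̃(s,π) for each state s and profile π, with Φ̃(μ,π) = ∑_s μ(s)·Φ̃(s,π)) satisfies, for every state s, every player i, all π_i, π_i', and every π_{-i}: |(Φ̃(s,(π_i',π_{-i})) − Φ̃(s,(π_i,π_{-i}))) − (Ṽ_i(s,(π_i',π_{-i})) − Ṽ_i(s,(π_i,π_{-i})))| ≤ α. Let π be a profile, ī a player, and s̄ a state, and let π⁺_ī be the policy of player ī equal to π_ī at every state except s̄, where π⁺_ī(s̄,a) = exp(Q̃_ī(s̄,a;π)/τ)/∑_{a'} exp(Q̃_ī(s̄,a';π)/τ). Then for every probability distribution μ on S: Φ̃(μ,(π⁺_ī,π_{-ī})) − Φ̃(μ,π) ≥ (τ·μ(s̄)/2)·‖π⁺_ī(s̄) − π_ī(s̄)‖₂² − α. -/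
open Finset

lemma aux_log_lt {x : ℝ} (hx : 0 < x) (hx1 : x ≤ 1) :
    (1 - x) + (1 - x) ^ 2 / 2 ≤ -Real.log x := by
  have h := Real.hasSum_pow_div_log_of_abs_lt_one (x := 1 - x)
    (by rw [abs_lt]; constructor <;> linarith)
  have h2 := sum_le_hasSum (Finset.range 2) (fun n _ => by
    have : 0 ≤ 1 - x := by linarith
    positivity) h
  simp [Finset.sum_range_succ] at h2
  norm_num at h2
  linarith

lemma aux_log_gt {x : ℝ} (hx1 : 1 ≤ x) : Real.log x ≤ (x - x⁻¹) / 2 := by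
  have h := Real.self_le_sinh_iff.2 (Real.log_nonneg hx1)
  rwa [Real.sinh_log (by linarith)] at h

lemma aux_coord {p q : ℝ} (hp : 0 ≤ p) (hp1 : p ≤ 1) (hq : 0 < q) (hq1 : q ≤ 1) :
    (p - q) + (q - p) ^ 2 / 2 ≤ p * Real.log p - p * Real.log q := by
  rcases hp.eq_or_lt with h | h
  · subst h; simp; nlinarith
  obtain ⟨x, hx⟩ : ∃ x, x = q / p := ⟨_, rfl⟩
  have hxp : 0 < x := by rw [hx]; positivity
  have hq' : q = p * x := by rw [hx]; field_simp
  have hl : Real.log q = Real.log p + Real.log x := by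
    rw [hq', Real.log_mul h.ne' hxp.ne']
  rw [hl]
  rcases le_total x 1 with h1 | h1
  · have := mul_le_mul_of_nonneg_left (aux_log_lt hxp h1) hp
    have h3 : p * p * (1-x)^2 ≤ p * 1 * (1-x)^2 := by gcongr
    rw [hq']; nlinarith
  · have := mul_le_mul_of_nonneg_left (aux_log_gt h1) hp
    have hpx : p ≤ x⁻¹ := by
      rw [le_inv_comm₀ h hxp, ← one_div, le_div_iff₀ h]; linarith
    have h3 : p * p * (1-x)^2 ≤ p * x⁻¹ * (1-x)^2 := by gcongr
    have h4 : x⁻¹ * (1-x)^2 = x⁻¹ - 2 + x := by field_simp; ring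
    have h5 : p * x⁻¹ * (1-x)^2 = p * (x⁻¹ - 2 + x) := by rw [mul_assoc, h4]
    rw [hq']; nlinarith

lemma aux_bell {S I : Type*} [Fintype S] [Fintype I] [DecidableEq I]
    {A : I → Type*} [∀ i, Fintype (A i)]
    (δ : ℝ) (P : S → (∀ i, A i) → S → ℝ) (u : S → (∀ i, A i) → ℝ)
    (π : ∀ j, S → A j → ℝ) (V : S → ℝ) (s : S) :
    expPay u π s + δ * ∑ s', transMat P π s s' * V s' =
      ∑ a : ∀ j, A j, jointDist π s a * (u s a + δ * ∑ s', P s a s' * V s') := by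
  simp only [expPay, transMat, mul_add, Finset.sum_add_distrib, Finset.sum_mul, Finset.mul_sum]
  congr 1
  rw [Finset.sum_comm]
  refine Finset.sum_congr rfl fun a _ => Finset.sum_congr rfl fun s' _ => ?_
  ring

lemma aux_joint_sum {S I : Type*} [Fintype I] [DecidableEq I]
    {A : I → Type*} [∀ i, Fintype (A i)]
    (π : ∀ j, S → A j → ℝ) (hπ : IsPolicy π) (s : S) :
    ∑ a : ∀ j, A j, jointDist π s a = 1 := by
  simp only [jointDist]
  rw [← Fintype.prod_sum]
  exact Finset.prod_eq_one fun i _ => (hπ i s).2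

lemma aux_marg {S I : Type*} [Fintype I] [DecidableEq I]
    {A : I → Type*} [∀ i, Fintype (A i)] [∀ i, DecidableEq (A i)]
    (π π' : ∀ j, S → A j → ℝ) (i : I) (s : S) (h : ∀ j, j ≠ i → π' j = π j)
    (f : (∀ j, A j) → ℝ) :
    ∑ ai, π' i s ai * (∑ a : ∀ j, A j,
      if a i = ai then (∏ j ∈ Finset.univ.erase i, π j s (a j)) * f a else 0) =
    ∑ a : ∀ j, A j, jointDist π' s a * f a := by
  simp only [Finset.mul_sum]
  rw [Finset.sum_comm]
  refine Finset.sum_congr rfl fun a _ => ?_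
  simp only [mul_ite, mul_zero]
  rw [Finset.sum_ite_eq]
  simp only [Finset.mem_univ, if_true]
  rw [← mul_assoc, jointDist, ← Finset.mul_prod_erase _ _ (Finset.mem_univ i)]
  congr 2
  exact Finset.prod_congr rfl fun j hj => by rw [h j (Finset.ne_of_mem_erase hj)]

/-- `⟨π'_i, Q̃⟩` in terms of the one-step operator. -/
lemma aux_Q {S I : Type*} [Fintype S] [Fintype I] [DecidableEq I]
    {A : I → Type*} [∀ i, Fintype (A i)] [∀ i, DecidableEq (A i)]
    (δ τ : ℝ) (P : S → (∀ i, A i) → S → ℝ) (u : S → (∀ i, A i) → ℝ)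
    (π π' : ∀ j, S → A j → ℝ) (hπ' : IsPolicy π') (V : S → ℝ) (i : I) (s : S)
    (h : ∀ j, j ≠ i → π' j = π j) :
    ∑ ai, π' i s ai * Qsmooth δ τ P u π V i s ai =
      expPay u π' s + δ * ∑ s', transMat P π' s s' * V s' - τ * negent (π i s) := by
  unfold Qsmooth
  rw [aux_marg π π' i s h (fun a => u s a - τ * negent (π i s) + δ * ∑ s', P s a s' * V s'),
    aux_bell]
  have h1 := aux_joint_sum π' hπ' s
  have : τ * negent (π i s) = ∑ a, jointDist π' s a * (τ * negent (π i s)) := by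
    rw [← Finset.sum_mul, h1, one_mul]
  conv_rhs => rw [this]
  rw [← Finset.sum_sub_distrib]
  refine Finset.sum_congr rfl fun a _ => ?_
  ring

lemma aux_softmax {α : Type*} [Fintype α] [Nonempty α] (τ : ℝ) (hτ : 0 < τ) (Q p q : α → ℝ)
    (hq : ∀ a, q a = softmax τ Q a) (hp : IsProbVec p) :
    IsProbVec q ∧ τ / 2 * ∑ a, (q a - p a) ^ 2 ≤
      ∑ a, q a * Q a - ∑ a, p a * Q a - τ * negent q + τ * negent p := by
  obtain ⟨Z, hZ⟩ : ∃ Z, Z = ∑ a', Real.exp (Q a' / τ) := ⟨_, rfl⟩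
  have hZp : 0 < Z := by
    rw [hZ]; exact Finset.sum_pos (fun a _ => Real.exp_pos _) Finset.univ_nonempty
  have hq' : ∀ a, q a = Real.exp (Q a / τ) / Z := fun a => by rw [hq, softmax, hZ]
  have hqp : ∀ a, 0 < q a := fun a => by rw [hq']; positivity
  have hqs : ∑ a, q a = 1 := by
    simp only [hq']; rw [← Finset.sum_div, ← hZ, div_self hZp.ne']
  have le1 : ∀ r : α → ℝ, IsProbVec r → ∀ a, r a ≤ 1 := fun r hr a => by
    rw [← hr.2]; exact Finset.single_le_sum (fun b _ => hr.1 b) (Finset.mem_univ a)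
  have hqP : IsProbVec q := ⟨fun a => (hqp a).le, hqs⟩
  refine ⟨hqP, ?_⟩
  have hQ : ∀ a, Q a = τ * Real.log (q a) + τ * Real.log Z := fun a => by
    rw [hq', Real.log_div (Real.exp_pos _).ne' hZp.ne', Real.log_exp]; field_simp; ring
  have key : ∀ r : α → ℝ, IsProbVec r →
      ∑ a, r a * Q a = τ * ∑ a, r a * Real.log (q a) + τ * Real.log Z := fun r hr => by
    have : τ * Real.log Z = ∑ a, r a * (τ * Real.log Z) := by
      rw [← Finset.sum_mul, hr.2, one_mul]
    rw [this, Finset.mul_sum, ← Finset.sum_add_distrib]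
    exact Finset.sum_congr rfl fun a _ => by rw [hQ]; ring
  rw [key q hqP, key p hp]
  have hs := Finset.sum_le_sum (s := Finset.univ) fun a _ =>
    aux_coord (hp.1 a) (le1 p hp a) (hqp a) (le1 q hqP a)
  rw [Finset.sum_add_distrib, Finset.sum_sub_distrib, Finset.sum_sub_distrib, hp.2, hqs,
    ← Finset.sum_div] at hs
  unfold negent
  nlinarith

/-- **One-step potential improvement for the smoothed best response update.** -/
theorem one_step_smoothed_br_potential_improvement
    {S I : Type*} [Fintype S] [Nonempty S] [DecidableEq S]
    [Fintype I] [Nonempty I] [DecidableEq I]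
    {A : I → Type*} [∀ i, Fintype (A i)] [∀ i, Nonempty (A i)] [∀ i, DecidableEq (A i)]
    (δ : ℝ) (hδ : 0 < δ) (hδ1 : δ < 1)
    (P : S → (∀ i, A i) → S → ℝ) (hP : IsKernel P)
    (u : I → S → (∀ i, A i) → ℝ)
    (τ : ℝ) (hτ : 0 < τ)
    (α : ℝ) (hα : 0 ≤ α)
    (Vt : I → (∀ j, S → A j → ℝ) → S → ℝ)
    (hVt : ∀ i π, IsPolicy π → IsSmoothedValueFun δ τ P (u i) π i (Vt i π))
    (Φt : (∀ j, S → A j → ℝ) → S → ℝ)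
    (hΦt : ∀ (s : S) (i : I) (π : ∀ j, S → A j → ℝ), IsPolicy π →
      ∀ (πi' : S → A i → ℝ), (∀ s', IsProbVec (πi' s')) →
        |(Φt (Function.update π i πi') s - Φt π s) -
          (Vt i (Function.update π i πi') s - Vt i π s)| ≤ α)
    (π : ∀ j, S → A j → ℝ) (hπ : IsPolicy π)
    (ib : I) (sb : S)
    -- the one-state smoothed best response update of player `ib` at state `sb`
    (πplus : S → A ib → ℝ)
    (hplus_off : ∀ s, s ≠ sb → πplus s = π ib s)
    (hplus_on : ∀ a, πplus sb a =
      softmax τ (fun a' => Qsmooth δ τ P (u ib) π (Vt ib π) ib sb a') a) :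
    ∀ (μ : S → ℝ), IsProbVec μ →
      (∑ s, μ s * Φt (Function.update π ib πplus) s) - (∑ s, μ s * Φt π s) ≥
        (τ * μ sb / 2) * (l2norm (fun a => πplus sb a - π ib sb a)) ^ 2 - α := by
  intro μ hμ
  obtain ⟨hqP, hgain⟩ := aux_softmax τ hτ _ _ _ hplus_on (hπ ib sb)
  have hpP : ∀ s, IsProbVec (πplus s) := fun s => by
    by_cases h : s = sb
    · rw [h]; exact hqP
    · rw [hplus_off s h]; exact hπ ib s
  obtain ⟨π', hπ'⟩ : ∃ π', π' = Function.update π ib πplus := ⟨_, rfl⟩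
  have hne : ∀ j, j ≠ ib → π' j = π j := fun j hj => by
    rw [hπ', Function.update_of_ne hj]
  have hib : π' ib = πplus := by rw [hπ', Function.update_self]
  have hpol : IsPolicy π' := fun j s => by
    by_cases h : j = ib
    · subst h; rw [hib]; exact hpP s
    · rw [hne j h]; exact hπ j s
  have hΦ : ∀ s, Vt ib π' s - Vt ib π s - α ≤ Φt π' s - Φt π s := fun s => by
    have := (abs_le.1 (hΦt s ib π hπ πplus hpP)).1
    rw [← hπ'] at this
    linarith
  rw [← hπ']
  have hV' := hVt ib π' hpol
  have hV := hVt ib π hπ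
  have hT : ∀ s s', 0 ≤ transMat P π' s s' := fun s s' =>
    Finset.sum_nonneg fun a _ => mul_nonneg
      (Finset.prod_nonneg fun j _ => (hpol j s).1 _) ((hP s a).1 s')
  have hT1 : ∀ s, ∑ s', transMat P π' s s' = 1 := fun s => by
    unfold transMat
    rw [Finset.sum_comm, ← aux_joint_sum π' hpol s]
    refine Finset.sum_congr rfl fun a _ => ?_
    rw [← Finset.mul_sum, (hP s a).2, mul_one]
  obtain ⟨D, hD⟩ : ∃ D : S → ℝ, D = fun s => Vt ib π' s - Vt ib π s := ⟨_, rfl⟩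
  have hsub : ∀ s, ∑ s', transMat P π' s s' * D s' =
      ∑ s', transMat P π' s s' * Vt ib π' s' - ∑ s', transMat P π' s s' * Vt ib π s' := by
    intro s
    rw [hD, ← Finset.sum_sub_distrib]
    exact Finset.sum_congr rfl fun _ _ => by ring
  obtain ⟨g, hg⟩ : ∃ g, g = τ / 2 * ∑ a, (πplus sb a - π ib sb a) ^ 2 := ⟨_, rfl⟩
  have hg0 : 0 ≤ g := by rw [hg]; positivity
  have hrec_sb : g + δ * ∑ s', transMat P π' sb s' * D s' ≤ D sb := by
    have e1 := aux_Q δ τ P (u ib) π π' hpol (Vt ib π) ib sb hne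
    have e2 := aux_Q δ τ P (u ib) π π hπ (Vt ib π) ib sb (fun _ _ => rfl)
    have e3 := hV' sb
    have e4 := hV sb
    rw [hib] at e1 e3
    rw [hsub, hg]
    have : D sb = Vt ib π' sb - Vt ib π sb := by rw [hD]
    rw [this]
    linarith
  have hrec_off : ∀ s, s ≠ sb → δ * ∑ s', transMat P π' s s' * D s' = D s := by
    intro s hs
    have e0 : ∀ j, π' j s = π j s := fun j => by
      by_cases h : j = ib
      · subst h; rw [hib, hplus_off s hs]
      · rw [hne j h]
    have e1 : ∀ a, jointDist π' s a = jointDist π s a := fun a => by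
      simp only [jointDist, e0]
    have e3 := hV' s
    have e4 := hV s
    have e5 : expPay (u ib) π' s = expPay (u ib) π s := by simp only [expPay, e1]
    have e6 : ∀ s', transMat P π s s' = transMat P π' s s' := fun s' => by
      simp only [transMat, e1]
    rw [e0, e5] at e3
    simp only [e6] at e4
    have : D s = Vt ib π' s - Vt ib π s := by rw [hD]
    rw [hsub, this]
    linarith
  have hrec : ∀ s, δ * ∑ s', transMat P π' s s' * D s' ≤ D s := fun s => by
    by_cases h : s = sb
    · subst h; linarith
    · exact (hrec_off s h).le
  have hD0 : ∀ s, 0 ≤ D s := by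
    obtain ⟨s0, hs0⟩ := Finite.exists_min D
    have h1 : D s0 ≤ ∑ s', transMat P π' s0 s' * D s' := by
      calc D s0 = ∑ s', transMat P π' s0 s' * D s0 := by rw [← Finset.sum_mul, hT1, one_mul]
        _ ≤ _ := Finset.sum_le_sum fun s' _ => mul_le_mul_of_nonneg_left (hs0 s') (hT s0 s')
    have h2 := hrec s0
    have h3 := mul_le_mul_of_nonneg_left h1 hδ.le
    have h4 : 0 ≤ D s0 := by nlinarith
    exact fun s => h4.trans (hs0 s)
  have hDsb : g ≤ D sb := by
    have : 0 ≤ ∑ s', transMat P π' sb s' * D s' :=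
      Finset.sum_nonneg fun s' _ => mul_nonneg (hT _ _) (hD0 s')
    have := mul_nonneg hδ.le this
    linarith
  have hl2 : l2norm (fun a => πplus sb a - π ib sb a) ^ 2 =
      ∑ a, (πplus sb a - π ib sb a) ^ 2 := by
    unfold l2norm
    exact Real.sq_sqrt (Finset.sum_nonneg fun a _ => sq_nonneg _)
  rw [hl2, ← Finset.sum_sub_distrib]
  have h1 : ∑ s, μ s * (D s - α) ≤ ∑ s, (μ s * Φt π' s - μ s * Φt π s) :=
    Finset.sum_le_sum fun s _ => by
      rw [← mul_sub]
      refine mul_le_mul_of_nonneg_left ?_ (hμ.1 s)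
      rw [hD]; exact hΦ s
  have h2 : ∑ s, μ s * (D s - α) = ∑ s, μ s * D s - α := by
    simp only [mul_sub]
    rw [Finset.sum_sub_distrib, ← Finset.sum_mul, hμ.2, one_mul]
  have h3 : μ sb * D sb ≤ ∑ s, μ s * D s :=
    Finset.single_le_sum (f := fun s => μ s * D s)
      (fun s _ => mul_nonneg (hμ.1 s) (hD0 s)) (Finset.mem_univ sb)
  have h4 := mul_le_mul_of_nonneg_left hDsb (hμ.1 sb)
  have h5 : τ * μ sb / 2 * ∑ a, (πplus sb a - π ib sb a) ^ 2 = μ sb * g := by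
    rw [hg]; ring
  rw [h5]
  linarith
end
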